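/- (Operator Klamkin–McLenaghan type inequality.) Let Φ be a positive linear map from n×n to m×m complex matrices that moreover maps positive definite matrices to positive definite matrices, let f : ℝ → ℝ be operator monotone on [0,∞) with f(x) > 0 for x > 0, and let A, B be positive definite n×n complex matrices with s·A ≤ B ≤ t·A for some scalars 0 < s ≤ t with √(st) ≥ 1. Set C = Φ(f(A ! B)), D = Φ(f(√(st)·A)), E = Φ(f(B)), and T = C^{-1/2} D C^{-1/2}. Then C^{-1/2} E C^{-1/2} − C^{1/2} D^{-1} C^{1/2} ≤ ((√s+√t)²/2 − 2)·I − (T^{1/2} − T^{-1/2})². -/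

import Mathlib

open Matrix ComplexOrder

/-- Loewner order: `A ≤ B` iff `B - A` is positive semidefinite. -/
def LoewnerLE {n : Type} [Fintype n] (A B : Matrix n n ℂ) : Prop := (B - A).PosSemidef

/-- The positive square root of a (Hermitian) matrix, via the continuous functional calculus. -/
noncomputable def msqrt {n : Type} [Fintype n] [DecidableEq n] (A : Matrix n n ℂ) :
    Matrix n n ℂ := cfc Real.sqrt A

/-- The arithmetic mean `A ∇ B = (A + B)/2`. -/
noncomputable def amean {n : Type} [Fintype n] [DecidableEq n] (A B : Matrix n n ℂ) :
    Matrix n n ℂ := (2 : ℝ)⁻¹ • (A + B)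

/-- The harmonic mean `A ! B = ((A⁻¹ + B⁻¹)/2)⁻¹`. -/
noncomputable def hmean {n : Type} [Fintype n] [DecidableEq n] (A B : Matrix n n ℂ) :
    Matrix n n ℂ := ((2 : ℝ)⁻¹ • (A⁻¹ + B⁻¹))⁻¹

/-- The geometric mean `A ♯ B = A^(1/2) (A^(-1/2) B A^(-1/2))^(1/2) A^(1/2)`. -/
noncomputable def gmean {n : Type} [Fintype n] [DecidableEq n] (A B : Matrix n n ℂ) :
    Matrix n n ℂ := msqrt A * msqrt ((msqrt A)⁻¹ * B * (msqrt A)⁻¹) * msqrt A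

/-- `f : ℝ → ℝ` is operator monotone on `[0,∞)`: it is continuous and nonnegative on `[0,∞)`
and monotone on positive-semidefinite complex matrices of every finite size, with `f` applied
via the continuous functional calculus. -/
def OpMonotone (f : ℝ → ℝ) : Prop :=
  ContinuousOn f (Set.Ici 0) ∧ (∀ x : ℝ, 0 ≤ x → 0 ≤ f x) ∧
    ∀ (k : Type) [Fintype k] [DecidableEq k] (X Y : Matrix k k ℂ),
      X.PosSemidef → LoewnerLE X Y → LoewnerLE (cfc f X) (cfc f Y)

/-- `g : ℝ → ℝ` is operator monotone decreasing on `(0,∞)`: it is continuous and nonnegative on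
`(0,∞)` and antitone on positive-definite complex matrices of every finite size, with `g` applied
via the continuous functional calculus. -/
def OpAntitone (g : ℝ → ℝ) : Prop :=
  ContinuousOn g (Set.Ioi 0) ∧ (∀ x : ℝ, 0 < x → 0 ≤ g x) ∧
    ∀ (k : Type) [Fintype k] [DecidableEq k] (X Y : Matrix k k ℂ),
      X.PosDef → Y.PosDef → LoewnerLE X Y → LoewnerLE (cfc g Y) (cfc g X)

/-!
An operator monotone `f` is operator concave by Hansen's inequality `Vᴴ f(X) V ≤ f(Vᴴ X V)` for
isometries `V`. To see the latter, put `P = V Vᴴ` and `Q = 1 - P`; for every `d > 0`,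
`X ≤ (1 + d) P X P + (1 + d⁻¹) Q X Q`, and the right-hand side commutes with `P` and restricts to
`(1 + d) Vᴴ X V` on the range of `V`. Apply `f` and let `d → 0`. Concavity and `f ≥ 0` also give
`f(κ X) ≤ κ f(X)` for `κ ≥ 1`.

Take `κ = (√s + √t)² / 4`. Then `(√(st) A + B) / 2 ≤ κ (A ! B)`: conjugating by `A^(-1/2)` reduces
this to a scalar inequality on `[s, t]`, namely `(x - s)(t - x) + (√(st) - 1)(x + √(st)) ≥ 0`.
Hence `D + E ≤ 2 κ C`. Conjugating by `C^(-1/2)` turns this into the claim, because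
`(T^(1/2) - T^(-1/2))² = T + T⁻¹ - 2` and `T⁻¹ = C^(1/2) D⁻¹ C^(1/2)`.
-/

open scoped MatrixOrder

section FunctionalCalculus

variable {𝕜 k n : Type*} [RCLike 𝕜] [Fintype k] [DecidableEq k] [Fintype n] [DecidableEq n]

theorem aeval_mul_of_mul_eq_mul {R α : Type*} [CommSemiring R] [CommSemiring α] [Algebra R α]
    {Z : Matrix k k α} {X : Matrix n n α} {V : Matrix k n α} (h : Z * V = V * X)
    (p : Polynomial R) : Polynomial.aeval Z p * V = V * Polynomial.aeval X p := by
  have pow_mul (i : ℕ) : Z ^ i * V = V * X ^ i := by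
    induction i with
    | zero => rw [pow_zero, pow_zero, Matrix.one_mul, Matrix.mul_one]
    | succ i ih => rw [pow_succ, Matrix.mul_assoc, h, ← Matrix.mul_assoc, ih, Matrix.mul_assoc,
        ← pow_succ]
  induction p using Polynomial.induction_on' with
  | add p q hp hq => rw [map_add, map_add, Matrix.add_mul, Matrix.mul_add, hp, hq]
  | monomial i a =>
    simp only [Polynomial.aeval_monomial, Algebra.algebraMap_eq_smul_one, smul_one_mul,
      Matrix.smul_mul, Matrix.mul_smul, pow_mul]

theorem cfc_mul_of_mul_eq_mul (f : ℝ → ℝ) {Z : Matrix k k 𝕜} {X : Matrix n n 𝕜}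
    {V : Matrix k n 𝕜} (hZ : Z.IsHermitian) (hX : X.IsHermitian) (h : Z * V = V * X) :
    cfc f Z * V = V * cfc f X := by
  let S : Finset ℝ := (Z.finite_real_spectrum.union X.finite_real_spectrum).toFinset
  let p := Lagrange.interpolate S id f
  have hp : ∀ x ∈ S, f x = p.eval x := fun x hx =>
    (Lagrange.eval_interpolate_at_node f (Set.injOn_id _) hx).symm
  have hfZ : cfc f Z = Polynomial.aeval Z p := by
    rw [← cfc_polynomial p Z hZ]
    exact cfc_congr fun x hx => hp x (by simp [S, hx])
  have hfX : cfc f X = Polynomial.aeval X p := by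
    rw [← cfc_polynomial p X hX]
    exact cfc_congr fun x hx => hp x (by simp [S, hx])
  rw [hfZ, hfX, aeval_mul_of_mul_eq_mul h]

theorem cfc_fromBlocks_diagonal (f : ℝ → ℝ) {X : Matrix k k 𝕜} {Y : Matrix n n 𝕜}
    (hX : X.IsHermitian) (hY : Y.IsHermitian) :
    cfc f (fromBlocks X 0 0 Y) = fromBlocks (cfc f X) 0 0 (cfc f Y) := by
  have hZ : (fromBlocks X 0 0 Y).IsHermitian := .fromBlocks hX (conjTranspose_zero) hY
  let V : Matrix (k ⊕ n) k 𝕜 := fromRows 1 0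
  let W : Matrix (k ⊕ n) n 𝕜 := fromRows 0 1
  have hV : cfc f (fromBlocks X 0 0 Y) * V = V * cfc f X :=
    cfc_mul_of_mul_eq_mul f hZ hX (by simp [V, fromBlocks_mul_fromRows, fromRows_mul])
  have hW : cfc f (fromBlocks X 0 0 Y) * W = W * cfc f Y :=
    cfc_mul_of_mul_eq_mul f hZ hY (by simp [W, fromBlocks_mul_fromRows, fromRows_mul])
  calc cfc f (fromBlocks X 0 0 Y)
      = cfc f (fromBlocks X 0 0 Y) * fromCols V W := by
        rw [fromCols_fromRows_eq_fromBlocks, fromBlocks_one, Matrix.mul_one]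
    _ = fromCols (V * cfc f X) (W * cfc f Y) := by rw [mul_fromCols, hV, hW]
    _ = fromBlocks (cfc f X) 0 0 (cfc f Y) := by
        rw [fromRows_mul, fromRows_mul, fromCols_fromRows_eq_fromBlocks, Matrix.one_mul,
          Matrix.one_mul, Matrix.zero_mul, Matrix.zero_mul]

theorem posDef_cfc {f : ℝ → ℝ} (hf : ∀ x, 0 < x → 0 < f x) {X : Matrix n n 𝕜} (hX : X.PosDef) :
    (cfc f X).PosDef := by
  rw [← isStrictlyPositive_iff_posDef] at hX ⊢
  rw [cfc_isStrictlyPositive_iff f X (X.finite_real_spectrum.continuousOn f) hX.isSelfAdjoint]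
  exact fun x hx => hf x (hX.spectrum_pos hx)

theorem continuousOn_cfc_smul {f : ℝ → ℝ} (hf : ContinuousOn f (Set.Ici 0)) {X : Matrix n n 𝕜}
    (hX : X.PosSemidef) : ContinuousOn (fun r : ℝ => cfc f (r • X)) (Set.Ici 0) := by
  have hcfc (r : ℝ) : cfc f (r • X) = Unitary.conjStarAlgAut 𝕜 _ hX.isHermitian.eigenvectorUnitary
      (diagonal fun i => (f (r * hX.isHermitian.eigenvalues i) : 𝕜)) := by
    have hscale : cfc (fun x => f (r * x)) X = cfc f (r • X) :=
      cfc_comp_const_mul r f X ((X.finite_real_spectrum.image _).continuousOn f) hX.isHermitian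
    rw [← hscale, hX.isHermitian.cfc_eq]
    rfl
  simp only [hcfc, Unitary.conjStarAlgAut_apply]
  have hdiag : ContinuousOn (fun r : ℝ =>
      diagonal fun i => (f (r * hX.isHermitian.eigenvalues i) : 𝕜)) (Set.Ici 0) := by
    refine (Continuous.matrix_diagonal continuous_id).comp_continuousOn
      (continuousOn_pi.2 fun i => ?_)
    refine RCLike.continuous_ofReal.comp_continuousOn (hf.comp (by fun_prop) fun r hr => ?_)
    exact mul_nonneg hr (hX.eigenvalues_nonneg i)
  exact (continuousOn_const.mul hdiag).mul continuousOn_const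

end FunctionalCalculus

section PosSemidef

variable {𝕜 k n : Type*} [RCLike 𝕜]

theorem posDef_of_posDef_of_le {X Y : Matrix n n 𝕜} (hX : X.PosDef) (hXY : X ≤ Y) : Y.PosDef :=
  add_sub_cancel X Y ▸ hX.add_posSemidef hXY

theorem posSemidef_fromBlocks_diagonal [Finite k] [Finite n] {X : Matrix k k 𝕜}
    {Y : Matrix n n 𝕜} (hX : X.PosSemidef) (hY : Y.PosSemidef) :
    (fromBlocks X 0 0 Y).PosSemidef := by
  classical
  cases nonempty_fintype k
  cases nonempty_fintype n
  obtain ⟨B, rfl⟩ := CStarAlgebra.nonneg_iff_eq_star_mul_self.1 hX.nonneg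
  obtain ⟨C, rfl⟩ := CStarAlgebra.nonneg_iff_eq_star_mul_self.1 hY.nonneg
  convert posSemidef_conjTranspose_mul_self (fromBlocks B 0 0 C) using 1
  simp only [star_eq_conjTranspose, fromBlocks_conjTranspose, fromBlocks_multiply,
    conjTranspose_zero, Matrix.mul_zero, Matrix.zero_mul, add_zero, zero_add]

theorem le_smul_conj_add_smul_conj_of_add_eq_one [Fintype n] [DecidableEq n]
    {X P Q : Matrix n n 𝕜} (hX : X.PosSemidef) (hP : P.IsHermitian) (hPQ : P + Q = 1) {d : ℝ}
    (hd : 0 < d) : X ≤ (1 + d) • (P * X * P) + (1 + d⁻¹) • (Q * X * Q) := by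
  have hQ : Q.IsHermitian := eq_sub_of_add_eq' hPQ ▸ isHermitian_one.sub hP
  have hM : (d • P - Q).IsHermitian := (hP.smul (.all d)).sub hQ
  have hdiff : (1 + d) • (P * X * P) + (1 + d⁻¹) • (Q * X * Q) - X =
      d⁻¹ • ((d • P - Q) * X * (d • P - Q)) := by
    have hX_expand : X = (P + Q) * X * (P + Q) := by rw [hPQ, Matrix.one_mul, Matrix.mul_one]
    conv_lhs => enter [2]; rw [hX_expand]
    simp only [Matrix.add_mul, Matrix.mul_add, Matrix.sub_mul, Matrix.mul_sub, Matrix.smul_mul,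
      Matrix.mul_smul]
    match_scalars <;> field_simp <;> ring
  have := hM.eq ▸ hX.mul_mul_conjTranspose_same (d • P - Q)
  rw [← sub_nonneg, hdiff]
  exact smul_nonneg (inv_nonneg.2 hd.le) this.nonneg

end PosSemidef

section SquareRoot

variable {n : Type} [Fintype n] [DecidableEq n] {X : Matrix n n ℂ}

theorem msqrt_mul_msqrt (hX : X.PosSemidef) : msqrt X * msqrt X = X := by
  rw [msqrt, ← cfc_mul Real.sqrt Real.sqrt X]
  conv_rhs => rw [← cfc_id ℝ X hX.isHermitian]
  exact cfc_congr fun x hx => Real.mul_self_sqrt (spectrum_nonneg_of_nonneg hX.nonneg hx)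

theorem posDef_msqrt (hX : X.PosDef) : (msqrt X).PosDef :=
  posDef_cfc (fun _ => Real.sqrt_pos.2) hX

theorem inv_msqrt_mul_self_mul_inv_msqrt (hX : X.PosDef) :
    (msqrt X)⁻¹ * X * (msqrt X)⁻¹ = 1 := by
  have hdet : IsUnit (msqrt X).det := (isUnit_iff_isUnit_det _).1 (posDef_msqrt hX).isUnit
  nth_rw 2 [← msqrt_mul_msqrt hX.posSemidef]
  rw [nonsing_inv_mul_cancel_left _ _ hdet, mul_nonsing_inv _ hdet]

theorem sq_msqrt_sub_inv_msqrt (hX : X.PosDef) :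
    (msqrt X - (msqrt X)⁻¹) ^ 2 = X + X⁻¹ - (2 : ℝ) • 1 := by
  have hdet : IsUnit (msqrt X).det := (isUnit_iff_isUnit_det _).1 (posDef_msqrt hX).isUnit
  have hinv : (msqrt X)⁻¹ * (msqrt X)⁻¹ = X⁻¹ := by
    rw [← Matrix.mul_inv_rev, msqrt_mul_msqrt hX.posSemidef]
  rw [sq, Matrix.sub_mul, Matrix.mul_sub, Matrix.mul_sub, msqrt_mul_msqrt hX.posSemidef, hinv,
    mul_nonsing_inv _ hdet, nonsing_inv_mul _ hdet]
  module

theorem inv_msqrt_conj_sub_le {D E : Matrix n n ℂ} (hX : X.PosDef) (hD : D.PosDef) {c : ℝ}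
    (h : D + E ≤ c • X) :
    (msqrt X)⁻¹ * E * (msqrt X)⁻¹ - msqrt X * D⁻¹ * msqrt X ≤
      (c - 2) • 1 - (msqrt ((msqrt X)⁻¹ * D * (msqrt X)⁻¹) -
        (msqrt ((msqrt X)⁻¹ * D * (msqrt X)⁻¹))⁻¹) ^ 2 := by
  have hR : (msqrt X)⁻¹.PosDef := (posDef_msqrt hX).inv
  have hdet : IsUnit (msqrt X).det := (isUnit_iff_isUnit_det _).1 (posDef_msqrt hX).isUnit
  have hT : ((msqrt X)⁻¹ * D * (msqrt X)⁻¹).PosDef := by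
    have := (IsUnit.posDef_star_right_conjugate_iff hR.isUnit).2 hD
    rwa [star_eq_conjTranspose, hR.isHermitian.eq] at this
  have hTinv : ((msqrt X)⁻¹ * D * (msqrt X)⁻¹)⁻¹ = msqrt X * D⁻¹ * msqrt X := by
    rw [Matrix.mul_inv_rev, Matrix.mul_inv_rev, nonsing_inv_nonsing_inv _ hdet, Matrix.mul_assoc]
  have hconj := hR.isHermitian.isSelfAdjoint.conjugate_le_conjugate h
  rw [Matrix.mul_add, Matrix.add_mul, Matrix.mul_smul, Matrix.smul_mul,
    inv_msqrt_mul_self_mul_inv_msqrt hX, ← sub_nonneg] at hconj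
  rw [sq_msqrt_sub_inv_msqrt hT, hTinv, ← sub_nonneg]
  convert hconj using 1
  module

end SquareRoot

namespace OpMonotone

open Filter Topology

variable {f : ℝ → ℝ} {k n : Type} [Fintype k] [DecidableEq k] [Fintype n] [DecidableEq n]

theorem cfc_le_cfc (hf : OpMonotone f) {X Y : Matrix n n ℂ} (hX : X.PosSemidef) (hXY : X ≤ Y) :
    cfc f X ≤ cfc f Y :=
  hf.2.2 n X Y hX hXY

theorem conjTranspose_mul_cfc_mul_le_cfc_smul (hf : OpMonotone f) {X : Matrix k k ℂ}
    (hX : X.PosSemidef) {V : Matrix k n ℂ} (hV : Vᴴ * V = 1) {d : ℝ} (hd : 0 < d) :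
    Vᴴ * cfc f X * V ≤ cfc f ((1 + d) • (Vᴴ * X * V)) := by
  set P : Matrix k k ℂ := V * Vᴴ with hP_def
  set Q : Matrix k k ℂ := 1 - P with hQ_def
  set G : Matrix k k ℂ := (1 + d) • (P * X * P) + (1 + d⁻¹) • (Q * X * Q) with hG_def
  have hP : P.IsHermitian := isHermitian_mul_conjTranspose_self V
  have hPV : P * V = V := by rw [hP_def, Matrix.mul_assoc, hV, Matrix.mul_one]
  have hQV : Q * V = 0 := by rw [hQ_def, Matrix.sub_mul, Matrix.one_mul, hPV, sub_self]
  have hXG : X ≤ G := le_smul_conj_add_smul_conj_of_add_eq_one hX hP (add_sub_cancel P 1) hd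
  have hG : G.IsHermitian := IsSelfAdjoint.of_ge hXG hX.isHermitian
  have hVXV : ((1 + d) • (Vᴴ * X * V)).IsHermitian :=
    ((hX.conjTranspose_mul_mul_same V).smul (by positivity : 0 ≤ 1 + d)).isHermitian
  have hGV : G * V = V * ((1 + d) • (Vᴴ * X * V)) := by
    simp only [hG_def, Matrix.add_mul, Matrix.smul_mul, Matrix.mul_smul, Matrix.mul_assoc, hPV,
      hQV, Matrix.mul_zero, smul_zero, add_zero]
    rw [hP_def, Matrix.mul_assoc]
  calc Vᴴ * cfc f X * V ≤ Vᴴ * cfc f G * V := by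
        rw [← sub_nonneg, ← Matrix.sub_mul, ← Matrix.mul_sub]
        exact (PosSemidef.conjTranspose_mul_mul_same (hf.cfc_le_cfc hX hXG) V).nonneg
    _ = Vᴴ * V * cfc f ((1 + d) • (Vᴴ * X * V)) := by
        rw [Matrix.mul_assoc, cfc_mul_of_mul_eq_mul f hG hVXV hGV, ← Matrix.mul_assoc]
    _ = cfc f ((1 + d) • (Vᴴ * X * V)) := by rw [hV, Matrix.one_mul]

open scoped Matrix.Norms.L2Operator in
theorem conjTranspose_mul_cfc_mul_le (hf : OpMonotone f) {X : Matrix k k ℂ} (hX : X.PosSemidef)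
    {V : Matrix k n ℂ} (hV : Vᴴ * V = 1) : Vᴴ * cfc f X * V ≤ cfc f (Vᴴ * X * V) := by
  have hlim : Tendsto (fun r : ℝ => cfc f (r • (Vᴴ * X * V))) (𝓝[>] 1)
      (𝓝 (cfc f (Vᴴ * X * V))) := by
    have h := continuousOn_cfc_smul hf.1 (hX.conjTranspose_mul_mul_same V) 1
      (Set.mem_Ici.2 zero_le_one)
    rw [ContinuousWithinAt, one_smul] at h
    exact h.mono_left (nhdsWithin_mono 1 fun r (hr : 1 < r) =>
      Set.mem_Ici.2 (zero_le_one.trans hr.le))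
  refine ge_of_tendsto hlim ?_
  filter_upwards [self_mem_nhdsWithin] with r hr
  simpa only [add_sub_cancel] using
    hf.conjTranspose_mul_cfc_mul_le_cfc_smul hX hV (sub_pos.2 hr)

theorem concaveOn_cfc (hf : OpMonotone f) :
    ConcaveOn ℝ {X : Matrix n n ℂ | X.PosSemidef} (cfc f) := by
  refine ⟨fun X hX Y hY a b ha hb _ => (hX.smul ha).add (hY.smul hb),
    fun X (hX : X.PosSemidef) Y (hY : Y.PosSemidef) a b ha hb hab => ?_⟩
  let V : Matrix (n ⊕ n) n ℂ := fromRows (√a • 1) (√b • 1)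
  have hVH : Vᴴ = fromCols (√a • 1) (√b • 1) := by
    simp only [V, conjTranspose_fromRows_eq_fromCols_conjTranspose, conjTranspose_smul,
      conjTranspose_one, star_trivial]
  have hcompress (Z W : Matrix n n ℂ) : Vᴴ * fromBlocks Z 0 0 W * V = a • Z + b • W := by
    rw [hVH]
    simp only [V, Matrix.mul_assoc, fromBlocks_mul_fromRows, fromCols_mul_fromRows,
      Matrix.mul_smul, Matrix.smul_mul, Matrix.mul_one, Matrix.one_mul, smul_zero, add_zero,
      zero_add, smul_smul, Real.mul_self_sqrt ha, Real.mul_self_sqrt hb]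
  have hV : Vᴴ * V = 1 := by
    rw [← Matrix.mul_one Vᴴ, ← fromBlocks_one, hcompress, ← add_smul, hab, one_smul]
  have h := hf.conjTranspose_mul_cfc_mul_le (posSemidef_fromBlocks_diagonal hX hY) hV
  rwa [cfc_fromBlocks_diagonal f hX.isHermitian hY.isHermitian, hcompress, hcompress] at h

theorem cfc_smul_le (hf : OpMonotone f) {X : Matrix n n ℂ} (hX : X.PosSemidef) {c : ℝ}
    (hc : 1 ≤ c) : cfc f (c • X) ≤ c • cfc f X := by
  have hc₀ : 0 < c := zero_lt_one.trans_le hc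
  have hzero : 0 ≤ cfc f (0 : Matrix n n ℂ) :=
    cfc_nonneg fun x hx => hf.2.1 x (spectrum_nonneg_of_nonneg le_rfl hx)
  have hconcave : c⁻¹ • cfc f (c • X) + (1 - c⁻¹) • cfc f 0 ≤ cfc f X := by
    have h := hf.concaveOn_cfc.2 (hX.smul hc₀.le) PosSemidef.zero (inv_nonneg.2 hc₀.le)
      (sub_nonneg.2 (inv_le_one_of_one_le₀ hc)) (add_sub_cancel c⁻¹ 1)
    rwa [smul_zero, add_zero, inv_smul_smul₀ hc₀.ne'] at h
  have hdrop : c⁻¹ • cfc f (c • X) ≤ cfc f X :=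
    (le_add_of_nonneg_right
      (smul_nonneg (sub_nonneg.2 (inv_le_one_of_one_le₀ hc)) hzero)).trans hconcave
  rwa [inv_smul_le_iff_of_pos hc₀] at hdrop

end OpMonotone

theorem half_mul_sqrt_mul_add_le {s t x : ℝ} (hs : 0 < s) (hsx : s ≤ x) (hxt : x ≤ t)
    (hst : 1 ≤ √(s * t)) :
    2⁻¹ * (√(s * t) + x) ≤ (√s + √t) ^ 2 / 4 * (2 * x / (1 + x)) := by
  have hx : 0 < x := hs.trans_le hsx
  have ht : 0 < t := hx.trans_le hxt
  have hg : √(s * t) = √s * √t := Real.sqrt_mul hs.le t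
  rw [← mul_div_assoc, le_div_iff₀ (by positivity)]
  have hident : (√s + √t) ^ 2 * x - (√(s * t) + x) * (1 + x) =
      (x - s) * (t - x) + (√(s * t) - 1) * (x + √(s * t)) := by
    rw [hg]
    linear_combination (x - √t ^ 2) * Real.sq_sqrt hs.le + (x - s) * Real.sq_sqrt ht.le
  have h₁ : 0 ≤ (x - s) * (t - x) := mul_nonneg (sub_nonneg.2 hsx) (sub_nonneg.2 hxt)
  have h₂ : 0 ≤ (√(s * t) - 1) * (x + √(s * t)) := mul_nonneg (sub_nonneg.2 hst) (by positivity)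
  linarith

section Means

variable {n : Type} [Fintype n] [DecidableEq n] {A B R S b : Matrix n n ℂ}

theorem posDef_hmean (hA : A.PosDef) (hB : B.PosDef) : (hmean A B).PosDef :=
  ((hA.inv.add hB.inv).smul (inv_pos.2 two_pos : (0 : ℝ) < 2⁻¹)).inv

theorem amean_mul_mul : amean (R * A * S) (R * B * S) = R * amean A B * S := by
  simp only [amean, Matrix.mul_smul, Matrix.smul_mul, Matrix.mul_add, Matrix.add_mul]

theorem hmean_mul_mul (hR : IsUnit R) (hS : IsUnit S) :
    hmean (R * A * S) (R * B * S) = R * hmean A B * S := by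
  have hsum : (2 : ℝ)⁻¹ • ((R * A * S)⁻¹ + (R * B * S)⁻¹) =
      S⁻¹ * ((2 : ℝ)⁻¹ • (A⁻¹ + B⁻¹)) * R⁻¹ := by
    simp only [Matrix.mul_inv_rev, Matrix.mul_smul, Matrix.smul_mul, Matrix.mul_add,
      Matrix.add_mul, Matrix.mul_assoc]
  rw [hmean, hsum, Matrix.mul_inv_rev, Matrix.mul_inv_rev,
    nonsing_inv_nonsing_inv R ((isUnit_iff_isUnit_det R).1 hR),
    nonsing_inv_nonsing_inv S ((isUnit_iff_isUnit_det S).1 hS), ← Matrix.mul_assoc, hmean]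

theorem amean_smul_one_left (hb : IsSelfAdjoint b) (g : ℝ) :
    amean (g • 1) b = cfc (fun x : ℝ => 2⁻¹ * (g + x)) b := by
  rw [cfc_const_mul .., cfc_const_add .., cfc_id' ℝ b hb, Algebra.algebraMap_eq_smul_one, amean]

theorem hmean_one_left (hb : b.PosDef) :
    hmean 1 b = cfc (fun x : ℝ => 2 * x / (1 + x)) b := by
  have hcont (h : ℝ → ℝ) : ContinuousOn h (spectrum ℝ b) := b.finite_real_spectrum.continuousOn h
  have hsa : IsSelfAdjoint b := hb.isHermitian
  have hpos : ∀ x ∈ spectrum ℝ b, 0 < x := fun x hx => hb.isStrictlyPositive.spectrum_pos hx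
  have hsum : (2 : ℝ)⁻¹ • (1⁻¹ + b⁻¹) = cfc (fun x : ℝ => 2⁻¹ * (1 + x⁻¹)) b := by
    rw [cfc_const_mul _ _ b (hcont _), cfc_const_add 1 _ b (hcont _), map_one,
      cfc_inv _ b (fun x hx => (hpos x hx).ne'), cfc_id' ℝ b hsa, inv_one,
      nonsing_inv_eq_ringInverse]
  rw [hmean, hsum, nonsing_inv_eq_ringInverse, ← cfc_inv _ b _ (hcont _)]
  · refine cfc_congr fun x hx => ?_
    have := hpos x hx
    field_simp
    rw [add_comm]
  · intro x hx
    have := hpos x hx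
    positivity

theorem amean_sqrt_smul_one_le_smul_hmean {s t : ℝ} (hs : 0 < s) (hst : 1 ≤ √(s * t))
    (hsb : s • 1 ≤ b) (hbt : b ≤ t • 1) :
    amean (√(s * t) • 1) b ≤ ((√s + √t) ^ 2 / 4) • hmean 1 b := by
  have hb : b.PosDef := posDef_of_posDef_of_le (PosDef.one.smul hs) hsb
  have hsa : IsSelfAdjoint b := hb.isHermitian
  have hcont (h : ℝ → ℝ) : ContinuousOn h (spectrum ℝ b) := b.finite_real_spectrum.continuousOn h
  rw [← Algebra.algebraMap_eq_smul_one] at hsb hbt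
  have hs_le := (algebraMap_le_iff_le_spectrum hsa).1 hsb
  have hle_t := (le_algebraMap_iff_spectrum_le hsa).1 hbt
  rw [amean_smul_one_left hsa, hmean_one_left hb, ← cfc_const_mul _ _ b (hcont _)]
  exact cfc_mono (fun x hx => half_mul_sqrt_mul_add_le hs (hs_le x hx) (hle_t x hx) hst)
    (hcont _) (hcont _)

theorem amean_sqrt_smul_le_smul_hmean {s t : ℝ} (hA : A.PosDef) (hs : 0 < s) (hst : 1 ≤ √(s * t))
    (hsA : s • A ≤ B) (hBt : B ≤ t • A) :
    amean (√(s * t) • A) B ≤ ((√s + √t) ^ 2 / 4) • hmean A B := by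
  set S := msqrt A
  have hS : S.PosDef := posDef_msqrt hA
  have hS_det : IsUnit S.det := (isUnit_iff_isUnit_det S).1 hS.isUnit
  have hSA : S * 1 * S = A := by rw [Matrix.mul_one, msqrt_mul_msqrt hA.posSemidef]
  have hSB : S * (S⁻¹ * B * S⁻¹) * S = B := by
    rw [Matrix.mul_assoc S⁻¹, mul_nonsing_inv_cancel_left S _ hS_det,
      nonsing_inv_mul_cancel_right S _ hS_det]
  have hSAS : S⁻¹ * A * S⁻¹ = 1 := inv_msqrt_mul_self_mul_inv_msqrt hA
  have hsb : s • 1 ≤ S⁻¹ * B * S⁻¹ := by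
    have h := hS.inv.isHermitian.isSelfAdjoint.conjugate_le_conjugate hsA
    rwa [Matrix.mul_smul, Matrix.smul_mul, hSAS] at h
  have hbt : S⁻¹ * B * S⁻¹ ≤ t • 1 := by
    have h := hS.inv.isHermitian.isSelfAdjoint.conjugate_le_conjugate hBt
    rwa [Matrix.mul_smul, Matrix.smul_mul, hSAS] at h
  calc amean (√(s * t) • A) B = S * amean (√(s * t) • 1) (S⁻¹ * B * S⁻¹) * S := by
        rw [← amean_mul_mul, Matrix.mul_smul, Matrix.smul_mul, hSA, hSB]
    _ ≤ S * (((√s + √t) ^ 2 / 4) • hmean 1 (S⁻¹ * B * S⁻¹)) * S :=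
        hS.isHermitian.isSelfAdjoint.conjugate_le_conjugate
          (amean_sqrt_smul_one_le_smul_hmean hs hst hsb hbt)
    _ = ((√s + √t) ^ 2 / 4) • hmean A B := by
        rw [Matrix.mul_smul, Matrix.smul_mul, ← hmean_mul_mul hS.isUnit hS.isUnit, hSA, hSB]

end Means

theorem OpMonotone.cfc_add_cfc_le {n : Type} [Fintype n] [DecidableEq n] {f : ℝ → ℝ}
    (hf : OpMonotone f) {A B : Matrix n n ℂ} (hA : A.PosDef) {s t : ℝ} (hs : 0 < s)
    (hst : 1 ≤ √(s * t)) (hsA : s • A ≤ B) (hBt : B ≤ t • A) :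
    cfc f (√(s * t) • A) + cfc f B ≤ ((√s + √t) ^ 2 / 2) • cfc f (hmean A B) := by
  have hB : B.PosDef := posDef_of_posDef_of_le (hA.smul hs) hsA
  have hgA : (√(s * t) • A).PosSemidef := hA.posSemidef.smul (Real.sqrt_nonneg _)
  have hκ : 1 ≤ (√s + √t) ^ 2 / 4 := by
    rw [Real.sqrt_mul hs.le] at hst
    linarith [four_mul_le_sq_add √s √t]
  have hmid : (2 : ℝ)⁻¹ • (cfc f (√(s * t) • A) + cfc f B) ≤
      ((√s + √t) ^ 2 / 4) • cfc f (hmean A B) :=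
    calc (2 : ℝ)⁻¹ • (cfc f (√(s * t) • A) + cfc f B)
        ≤ cfc f (amean (√(s * t) • A) B) := by
          rw [amean, smul_add, smul_add]
          exact hf.concaveOn_cfc.2 hgA hB.posSemidef (by norm_num) (by norm_num) (by norm_num)
      _ ≤ cfc f (((√s + √t) ^ 2 / 4) • hmean A B) :=
          hf.cfc_le_cfc ((hgA.add hB.posSemidef).smul (by norm_num : (0 : ℝ) ≤ 2⁻¹))
            (amean_sqrt_smul_le_smul_hmean hA hs hst hsA hBt)
      _ ≤ ((√s + √t) ^ 2 / 4) • cfc f (hmean A B) :=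
          hf.cfc_smul_le (posDef_hmean hA hB).posSemidef hκ
  rw [inv_smul_le_iff_of_pos two_pos, smul_smul] at hmid
  convert hmid using 2
  ring

theorem klamkin_mclenaghan {n m : Type} [Fintype n] [DecidableEq n] [Fintype m] [DecidableEq m]
    (Φ : Matrix n n ℂ →ₗ[ℂ] Matrix m m ℂ)
    (hΦ : ∀ X : Matrix n n ℂ, X.PosSemidef → (Φ X).PosSemidef)
    (hΦ' : ∀ X : Matrix n n ℂ, X.PosDef → (Φ X).PosDef)
    (f : ℝ → ℝ) (hf : OpMonotone f) (hf' : ∀ x : ℝ, 0 < x → 0 < f x)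
    (A B : Matrix n n ℂ) (hA : A.PosDef) (hB : B.PosDef)
    (s t : ℝ) (hs : 0 < s) (hst : s ≤ t) (h1 : 1 ≤ Real.sqrt (s * t))
    (hsA : LoewnerLE (s • A) B) (htA : LoewnerLE B (t • A))
    (C D E T : Matrix m m ℂ)
    (hC : C = Φ (cfc f (hmean A B)))
    (hD : D = Φ (cfc f (Real.sqrt (s * t) • A)))
    (hE : E = Φ (cfc f B))
    (hT : T = (msqrt C)⁻¹ * D * (msqrt C)⁻¹) :
    LoewnerLE ((msqrt C)⁻¹ * E * (msqrt C)⁻¹ - msqrt C * D⁻¹ * msqrt C)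
      (((Real.sqrt s + Real.sqrt t) ^ 2 / 2 - 2) • (1 : Matrix m m ℂ)
        - (msqrt T - (msqrt T)⁻¹) ^ 2) := by
  have hH : (hmean A B).PosDef := posDef_hmean hA hB
  have hgA : (√(s * t) • A).PosDef := hA.smul (zero_lt_one.trans_le h1)
  have hCpos : C.PosDef := hC ▸ hΦ' _ (posDef_cfc hf' hH)
  have hDpos : D.PosDef := hD ▸ hΦ' _ (posDef_cfc hf' hgA)
  have hDE : D + E ≤ ((√s + √t) ^ 2 / 2) • C := by
    have h := hΦ _ (hf.cfc_add_cfc_le hA hs h1 hsA htA)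
    rwa [map_sub, map_add, LinearMap.map_smul_of_tower, ← hC, ← hD, ← hE] at h
  subst hT
  exact inv_msqrt_conj_sub_le hCpos hDpos hDE
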